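/- Let C ⊆ ℤ² be a finite set such that the grid graph on C is connected, and let D = ⋃_{c ∈ C} cell(c). Let S, T ⊆ C with |S| = |T| = n. Then there exist bijective enumerations s₁, …, sₙ of S and t₁, …, tₙ of T, and continuous maps γᵢ : [0, 1] → ℝ² with γᵢ(0) = sᵢ and γᵢ(1) = tᵢ for each i, such that for every i and every u ∈ [0, 1]: cell(γᵢ(u)) ⊆ D, the interior of cell(γᵢ(u)) is disjoint from cell(s_j) for all j > i, and the interior of cell(γᵢ(u)) is disjoint from cell(t_j) for all j < i. -/

import Mathlib

/-- The closed axis-aligned unit square with bottom-left corner `x`. -/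
def cell (x : ℝ × ℝ) : Set (ℝ × ℝ) := Set.Icc x.1 (x.1 + 1) ×ˢ Set.Icc x.2 (x.2 + 1)

/-- The canonical embedding of an integer grid point into the plane. -/
def toR2 (p : ℤ × ℤ) : ℝ × ℝ := ((p.1 : ℝ), (p.2 : ℝ))

/-- Two integer grid points are adjacent in the grid graph if their L¹-distance is 1. -/
def gridAdj (a b : ℤ × ℤ) : Prop := |a.1 - b.1| + |a.2 - b.2| = 1

/-- Reachability in the grid graph on the vertex set `C ⊆ ℤ²`. -/
def gridReach (C : Set (ℤ × ℤ)) : ℤ × ℤ → ℤ × ℤ → Prop :=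
  Relation.ReflTransGen (fun a b => a ∈ C ∧ b ∈ C ∧ gridAdj a b)

/-!
The motion is planned on the grid graph and then realised geometrically.

*Planning.* Only a finite connected part of `C` containing `S ∪ T` matters, and such a part has a
vertex `v` whose removal leaves it connected. If `v ∈ T`, first move to `v` the square reached first
by a walk from `v` to `S`; no other square is in its way, and the remaining squares are rearranged
by induction without ever using `v`. If `v ∈ S`, the same applies to the problem with `S` and `T`
exchanged, since a schedule run backwards in time is again a schedule. Otherwise `v` is ignored.

*Realisation.* A unit square translated along the segment between two adjacent grid points overlaps
only the two cells at the ends of the segment.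
-/

section Graph

variable {V : Type*} {G : SimpleGraph V} {A B C : Set V} {a b v : V} {n : ℕ}

variable (G) in
/-- `a` and `b` are the ends of a walk in `G` all of whose vertices, the ends included, lie in `A`;
the graph-theoretic counterpart of `JoinedIn`. -/
def ReachableIn (A : Set V) (a b : V) : Prop :=
  ∃ p : G.Walk a b, ∀ x ∈ p.support, x ∈ A

lemma ReachableIn.symm (h : ReachableIn G A a b) : ReachableIn G A b a := by
  obtain ⟨p, hp⟩ := h
  exact ⟨p.reverse, by simpa using hp⟩

lemma ReachableIn.mono (hAB : A ⊆ B) (h : ReachableIn G A a b) : ReachableIn G B a b := by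
  obtain ⟨p, hp⟩ := h
  exact ⟨p, fun x hx => hAB (hp x hx)⟩

lemma ReachableIn.right_mem (h : ReachableIn G A a b) : b ∈ A := by
  obtain ⟨p, hp⟩ := h
  exact hp b p.end_mem_support

lemma reachableIn_of_preconnected_induce (hA : (G.induce A).Preconnected) (ha : a ∈ A)
    (hb : b ∈ A) : ReachableIn G A a b := by
  obtain ⟨p⟩ := hA ⟨a, ha⟩ ⟨b, hb⟩
  refine ⟨p.map (SimpleGraph.Embedding.induce A).toHom, fun x hx => ?_⟩
  obtain ⟨y, -, rfl⟩ := List.mem_map.1 (p.support_map _ ▸ hx)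
  exact y.2

lemma exists_mem_reachableIn_sdiff_erase [DecidableEq V] {S : Finset V}
    (h : ReachableIn G A v b) (hb : b ∈ S) :
    ∃ a ∈ S, ReachableIn G (A \ S.erase a) a v := by
  obtain ⟨p, hp⟩ := h
  obtain ⟨a, ha, hap, hfirst⟩ :=
    p.exists_mem_support_forall_mem_support_imp_eq S ⟨b, by simp [hb]⟩
  refine ⟨a, ha, (p.takeUntil a hap).reverse, fun x hx => ?_⟩
  rw [SimpleGraph.Walk.support_reverse, List.mem_reverse] at hx
  exact ⟨hp x (p.support_takeUntil_subset_support hap hx), fun hxS =>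
    Finset.ne_of_mem_erase hxS (hfirst x (Finset.mem_of_mem_erase hxS) hx)⟩

lemma preconnected_induce_image_val {B : Set A} (h : ((G.induce A).induce B).Preconnected) :
    (G.induce (Subtype.val '' B)).Preconnected := by
  let f : (G.induce A).induce B →g G.induce (Subtype.val '' B) :=
    { toFun := fun x => ⟨x.1.1, x.1, x.2, rfl⟩, map_rel' := id }
  refine h.map f ?_
  rintro ⟨_, x, hx, rfl⟩
  exact ⟨⟨x, hx⟩, rfl⟩

lemma exists_mem_preconnected_induce_sdiff_singleton (hfin : A.Finite) (hne : A.Nonempty)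
    (hA : (G.induce A).Preconnected) : ∃ v ∈ A, (G.induce (A \ {v})).Preconnected := by
  have := hfin.to_subtype
  have := hne.to_subtype
  have hconn : (G.induce A).Connected := { preconnected := hA }
  obtain ⟨v, hv⟩ := hconn.exists_preconnected_induce_compl_singleton_of_finite
  refine ⟨v, v.2, ?_⟩
  have himage : Subtype.val '' ({v}ᶜ : Set A) = A \ {v.1} := by
    rw [Set.image_compl_eq_range_sdiff_image Subtype.val_injective, Subtype.range_val,
      Set.image_singleton]
  rw [← himage]
  exact preconnected_induce_image_val hv

lemma exists_finset_preconnected_induce {F : Finset V} (hA : (G.induce A).Preconnected)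
    (hF : ↑F ⊆ A) : ∃ B : Finset V, F ⊆ B ∧ ↑B ⊆ A ∧ (G.induce (B : Set V)).Preconnected := by
  classical
  obtain rfl | ⟨x, hx⟩ := F.eq_empty_or_nonempty
  · exact ⟨∅, subset_rfl, by simp, fun x => absurd x.2 (by simp)⟩
  · obtain ⟨B, hFB, hB⟩ := (G.induce A).extend_finset_to_connected hA
      (t := F.subtype (· ∈ A)) ⟨⟨x, hF hx⟩, by simpa using hx⟩
    refine ⟨B.map (.subtype _), fun y hy => ?_, ?_, ?_⟩
    · exact Finset.mem_map.2 ⟨⟨y, hF hy⟩, hFB (by simpa using hy), rfl⟩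
    · exact fun y hy => Finset.property_of_mem_map_subtype B hy
    · rw [Finset.coe_map]
      exact preconnected_induce_image_val hB.preconnected

/-- The vertices of `C` available to the `i`-th move when the moves `s j → t j` are carried out in
increasing order: those occupied neither by a later source nor by an earlier target. -/
def freeSites (C : Set V) (s t : Fin n → V) (i : Fin n) : Set V :=
  C \ (s '' Set.Ioi i ∪ t '' Set.Iio i)

lemma freeSites_mono (hAB : A ⊆ B) (s t : Fin n → V) (i : Fin n) :
    freeSites A s t i ⊆ freeSites B s t i :=
  Set.sdiff_subset_sdiff_left hAB

lemma freeSites_comp_rev (s t : Fin n → V) (i : Fin n) :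
    freeSites C (t ∘ Fin.rev) (s ∘ Fin.rev) i = freeSites C s t i.rev := by
  simp only [freeSites, Set.image_comp, Set.image_eq_preimage_of_inverse Fin.rev_rev Fin.rev_rev,
    Fin.preimage_rev_Ioi, Fin.preimage_rev_Iio, Set.union_comm]

lemma freeSites_cons_zero (s t : Fin n → V) :
    freeSites C (Fin.cons a s : Fin (n + 1) → V) (Fin.cons v t) 0 = C \ Set.range s := by
  ext c
  simp [freeSites, Fin.exists_fin_succ]

lemma freeSites_cons_succ (s t : Fin n → V) (i : Fin n) :
    freeSites C (Fin.cons a s : Fin (n + 1) → V) (Fin.cons v t) i.succ =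
      freeSites (C \ {v}) s t i := by
  ext c
  simp [freeSites, Fin.exists_fin_succ, eq_comm (a := v), and_assoc, and_left_comm]

variable (G) in
/-- A monotone schedule of `n` moves from `S` to `T` inside `C`: enumerations `s` of `S` and `t` of
`T` such that, in increasing order of `i`, a token can be moved along `G` from `s i` to `t i`
without meeting another token. -/
def HasMonotoneSchedule (C S T : Set V) (n : ℕ) : Prop :=
  ∃ s t : Fin n → V, s.Injective ∧ t.Injective ∧ Set.range s = S ∧ Set.range t = T ∧
    ∀ i, ReachableIn G (freeSites C s t i) (s i) (t i)

namespace HasMonotoneSchedule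

variable {S T : Set V}

lemma empty : HasMonotoneSchedule G C ∅ ∅ 0 :=
  ⟨Fin.elim0, Fin.elim0, Function.injective_of_subsingleton _,
    Function.injective_of_subsingleton _, Set.range_eq_empty _, Set.range_eq_empty _,
    fun i => i.elim0⟩

lemma mono (hAB : A ⊆ B) (h : HasMonotoneSchedule G A S T n) : HasMonotoneSchedule G B S T n := by
  obtain ⟨s, t, hs, ht, hS, hT, hreach⟩ := h
  exact ⟨s, t, hs, ht, hS, hT, fun i => (hreach i).mono (freeSites_mono hAB s t i)⟩

lemma symm (h : HasMonotoneSchedule G C S T n) : HasMonotoneSchedule G C T S n := by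
  obtain ⟨s, t, hs, ht, hS, hT, hreach⟩ := h
  refine ⟨t ∘ Fin.rev, s ∘ Fin.rev, ht.comp Fin.rev_injective, hs.comp Fin.rev_injective,
    by rw [Fin.rev_surjective.range_comp, hT], by rw [Fin.rev_surjective.range_comp, hS],
    fun i => ?_⟩
  rw [freeSites_comp_rev]
  exact (hreach i.rev).symm

lemma cons (ha : a ∈ S) (hv : v ∈ T) (hmove : ReachableIn G (C \ (S \ {a})) a v)
    (h : HasMonotoneSchedule G (C \ {v}) (S \ {a}) (T \ {v}) n) :
    HasMonotoneSchedule G C S T (n + 1) := by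
  obtain ⟨s, t, hs, ht, hS, hT, hreach⟩ := h
  refine ⟨Fin.cons a s, Fin.cons v t, ?_, ?_, ?_, ?_, fun i => ?_⟩
  · exact Fin.cons_injective_iff.2 ⟨by simp [hS], hs⟩
  · exact Fin.cons_injective_iff.2 ⟨by simp [hT], ht⟩
  · rw [Fin.range_cons, hS, Set.insert_sdiff_singleton, Set.insert_eq_of_mem ha]
  · rw [Fin.range_cons, hT, Set.insert_sdiff_singleton, Set.insert_eq_of_mem hv]
  · cases i using Fin.cases with
    | zero => simpa only [freeSites_cons_zero, hS, Fin.cons_zero] using hmove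
    | succ i => simpa only [freeSites_cons_succ, Fin.cons_succ] using hreach i

end HasMonotoneSchedule

variable (G) in
/-- Any two finite sets of `n` vertices of `C` are connected by a monotone schedule inside `C`. -/
def MonotonelyReconfigurable (C : Set V) : Prop :=
  ∀ ⦃S T : Finset V⦄ ⦃n : ℕ⦄, ↑S ⊆ C → ↑T ⊆ C → S.card = n → T.card = n →
    HasMonotoneSchedule G C S T n

namespace MonotonelyReconfigurable

lemma hasMonotoneSchedule_of_mem_target (hC : (G.induce C).Preconnected)
    (h : MonotonelyReconfigurable G (C \ {v})) {S T : Finset V} (hSC : ↑S ⊆ C) (hTC : ↑T ⊆ C)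
    (hS : S.card = n) (hT : T.card = n) (hvT : v ∈ T) : HasMonotoneSchedule G C S T n := by
  classical
  obtain ⟨m, rfl⟩ : ∃ m, n = m + 1 :=
    Nat.exists_eq_add_one.2 (hT ▸ Finset.card_pos.2 ⟨v, hvT⟩)
  obtain ⟨b, hb⟩ : S.Nonempty := Finset.card_pos.1 (by lia)
  obtain ⟨a, ha, hmove⟩ := exists_mem_reachableIn_sdiff_erase
    (reachableIn_of_preconnected_induce hC (hTC hvT) (hSC hb)) hb
  have hSv : ↑(S.erase a) ⊆ C \ {v} :=
    Set.subset_sdiff_singleton ((Finset.coe_subset.2 (S.erase_subset a)).trans hSC)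
      hmove.right_mem.2
  have hTv : ↑(T.erase v) ⊆ C \ {v} := by
    simpa only [Finset.coe_erase] using Set.sdiff_subset_sdiff_left hTC
  have hrest := h hSv hTv (by rw [Finset.card_erase_of_mem ha, hS, Nat.add_sub_cancel])
    (by rw [Finset.card_erase_of_mem hvT, hT, Nat.add_sub_cancel])
  simp only [Finset.coe_erase] at hmove hrest
  exact .cons ha hvT hmove hrest

lemma of_sdiff_singleton (hC : (G.induce C).Preconnected)
    (h : MonotonelyReconfigurable G (C \ {v})) : MonotonelyReconfigurable G C := by
  intro S T n hSC hTC hS hT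
  by_cases hvT : v ∈ T
  · exact hasMonotoneSchedule_of_mem_target hC h hSC hTC hS hT hvT
  by_cases hvS : v ∈ S
  · exact (hasMonotoneSchedule_of_mem_target hC h hTC hSC hT hS hvS).symm
  · exact (h (Set.subset_sdiff_singleton hSC hvS) (Set.subset_sdiff_singleton hTC hvT) hS hT).mono
      Set.sdiff_subset

lemma of_finset {C : Finset V} (hC : (G.induce (C : Set V)).Preconnected) :
    MonotonelyReconfigurable G C := by
  classical
  induction C using Finset.strongInduction with
  | H C ih =>
    obtain rfl | hne := C.eq_empty_or_nonempty
    · intro S T n hSC hTC hS hT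
      obtain rfl := Finset.subset_empty.1 (Finset.coe_subset.1 hSC)
      obtain rfl := Finset.subset_empty.1 (Finset.coe_subset.1 hTC)
      obtain rfl : 0 = n := hS
      simpa only [Finset.coe_empty] using HasMonotoneSchedule.empty
    · obtain ⟨v, hvC, hv⟩ :=
        exists_mem_preconnected_induce_sdiff_singleton C.finite_toSet (Finset.coe_nonempty.2 hne) hC
      rw [← Finset.coe_erase] at hv
      have hrest := ih (C.erase v) (Finset.erase_ssubset hvC) hv
      rw [Finset.coe_erase] at hrest
      exact hrest.of_sdiff_singleton hC

end MonotonelyReconfigurable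

theorem monotonelyReconfigurable_of_preconnected_induce (hC : (G.induce C).Preconnected) :
    MonotonelyReconfigurable G C := by
  classical
  intro S T n hSC hTC hS hT
  obtain ⟨B, hSTB, hBC, hB⟩ := exists_finset_preconnected_induce (F := S ∪ T) hC (by simp [*])
  obtain ⟨hSB, hTB⟩ := Finset.union_subset_iff.1 hSTB
  have hschedule := MonotonelyReconfigurable.of_finset hB
    (Finset.coe_subset.2 hSB) (Finset.coe_subset.2 hTB) hS hT
  exact hschedule.mono hBC

end Graph

section Grid

/-- The grid graph on all of `ℤ²`; the grid graph on a set `C` is `gridGraph.induce C`. -/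
def gridGraph : SimpleGraph (ℤ × ℤ) where
  Adj := gridAdj
  symm := ⟨fun a b h => by rwa [gridAdj, abs_sub_comm b.1, abs_sub_comm b.2]⟩
  loopless := ⟨fun a h => by simp [gridAdj] at h⟩

lemma reachable_induce_gridGraph_of_gridReach {C : Set (ℤ × ℤ)} (a b : C)
    (h : gridReach C a b) : (gridGraph.induce C).Reachable a b := by
  obtain ⟨b, hb⟩ := b
  change gridReach C a b at h
  induction h with
  | refl => rfl
  | tail _ hstep ih =>
    have hadj : (gridGraph.induce C).Adj ⟨_, hstep.1⟩ ⟨_, hb⟩ := hstep.2.2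
    exact (ih hstep.1).trans hadj.reachable

lemma uIcc_eq_pair_of_gridAdj {a b : ℤ × ℤ} (h : gridAdj a b) : Set.uIcc a b = {a, b} := by
  ext c
  simp only [Set.uIcc, Set.mem_Icc, Set.mem_insert_iff, Set.mem_singleton_iff, Prod.ext_iff,
    Prod.le_def, gridAdj, Prod.fst_inf, Prod.snd_inf, Prod.fst_sup, Prod.snd_sup] at h ⊢
  grind

end Grid

section Geometry

variable {x : ℝ × ℝ} {a b c : ℤ × ℤ} {A : Set (ℤ × ℤ)}

/-- The grid points whose cells overlap `cell x` in a set with nonempty interior. -/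
def footprint (x : ℝ × ℝ) : Set (ℤ × ℤ) :=
  {c | |x.1 - c.1| < 1 ∧ |x.2 - c.2| < 1}

lemma exists_int_abs_sub_lt_one_mem_Icc {x y : ℝ} (hy : y ∈ Set.Icc x (x + 1)) :
    ∃ c : ℤ, |x - c| < 1 ∧ y ∈ Set.Icc (c : ℝ) (c + 1) := by
  obtain ⟨hxy, hyx⟩ := hy
  obtain h | h := le_total y (⌊x⌋ + 1)
  · have hfloor := Int.floor_le x
    have hlt_floor := Int.lt_floor_add_one x
    exact ⟨⌊x⌋, abs_lt.2 ⟨by linarith, by linarith⟩, by linarith, h⟩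
  · have hceil := Int.le_ceil x
    have hceil_lt := Int.ceil_lt_add_one x
    have hceil_floor : (⌈x⌉ : ℝ) ≤ ⌊x⌋ + 1 := mod_cast Int.ceil_le_floor_add_one x
    exact ⟨⌈x⌉, abs_lt.2 ⟨by linarith, by linarith⟩, by linarith, by linarith⟩

lemma cell_subset_iUnion_footprint (x : ℝ × ℝ) :
    cell x ⊆ ⋃ c ∈ footprint x, cell (toR2 c) := by
  rintro y ⟨hy₁, hy₂⟩
  obtain ⟨c₁, hxc₁, hyc₁⟩ := exists_int_abs_sub_lt_one_mem_Icc hy₁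
  obtain ⟨c₂, hxc₂, hyc₂⟩ := exists_int_abs_sub_lt_one_mem_Icc hy₂
  exact Set.mem_biUnion (x := (c₁, c₂)) ⟨hxc₁, hxc₂⟩ ⟨hyc₁, hyc₂⟩

lemma interior_cell (x : ℝ × ℝ) :
    interior (cell x) = Set.Ioo x.1 (x.1 + 1) ×ˢ Set.Ioo x.2 (x.2 + 1) := by
  rw [cell, interior_prod_eq, interior_Icc, interior_Icc]

lemma interior_cell_inter_cell_eq_empty_of_notMem_footprint (hc : c ∉ footprint x) :
    interior (cell x) ∩ cell (toR2 c) = ∅ := by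
  rw [Set.eq_empty_iff_forall_notMem, interior_cell]
  rintro y ⟨⟨⟨hx₁, hx₁'⟩, hx₂, hx₂'⟩, ⟨hc₁, hc₁'⟩, hc₂, hc₂'⟩
  simp only [toR2] at hc₁ hc₁' hc₂ hc₂'
  exact hc ⟨abs_lt.2 ⟨by linarith, by linarith⟩, abs_lt.2 ⟨by linarith, by linarith⟩⟩

lemma mem_uIcc_of_abs_sub_lt_one {a b c : ℤ} {x : ℝ} (hx : x ∈ Set.uIcc (a : ℝ) b)
    (hc : |x - c| < 1) : c ∈ Set.uIcc a b := by
  obtain ⟨hxc, hcx⟩ := abs_lt.1 hc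
  rw [Set.uIcc, ← Int.cast_min, ← Int.cast_max] at hx
  have hlower : a ⊓ b < c + 1 := by exact_mod_cast hx.1.trans_lt (by linarith : x < c + 1)
  have hupper : c < a ⊔ b + 1 := by
    exact_mod_cast (by linarith [hx.2] : (c : ℝ) < (a ⊔ b : ℤ) + 1)
  exact ⟨Int.lt_add_one_iff.1 hlower, Int.lt_add_one_iff.1 hupper⟩

lemma footprint_subset_uIcc (hx : x ∈ Set.uIcc (toR2 a) (toR2 b)) :
    footprint x ⊆ Set.uIcc a b := by
  rintro c ⟨hc₁, hc₂⟩
  have h₁ := mem_uIcc_of_abs_sub_lt_one ⟨hx.1.1, hx.2.1⟩ hc₁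
  have h₂ := mem_uIcc_of_abs_sub_lt_one ⟨hx.1.2, hx.2.2⟩ hc₂
  exact ⟨⟨h₁.1, h₂.1⟩, h₁.2, h₂.2⟩

/-- The positions of a unit square that overlaps only cells of `A`. -/
def freePositions (A : Set (ℤ × ℤ)) : Set (ℝ × ℝ) :=
  {x | footprint x ⊆ A}

lemma toR2_mem_freePositions (ha : a ∈ A) : toR2 a ∈ freePositions A := by
  have hfoot : footprint (toR2 a) ⊆ Set.uIcc a a := footprint_subset_uIcc Set.left_mem_uIcc
  rw [Set.uIcc_self] at hfoot
  exact hfoot.trans (Set.singleton_subset_iff.2 ha)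

lemma joinedIn_freePositions_of_gridAdj (ha : a ∈ A) (hb : b ∈ A) (h : gridAdj a b) :
    JoinedIn (freePositions A) (toR2 a) (toR2 b) := by
  refine .of_segment_subset fun x hx => ?_
  have hfoot := footprint_subset_uIcc
    ((convex_Icc _ _).segment_subset Set.left_mem_uIcc Set.right_mem_uIcc hx)
  rw [uIcc_eq_pair_of_gridAdj h] at hfoot
  exact hfoot.trans (Set.pair_subset ha hb)

lemma joinedIn_freePositions_of_reachableIn (h : ReachableIn gridGraph A a b) :
    JoinedIn (freePositions A) (toR2 a) (toR2 b) := by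
  obtain ⟨p, hp⟩ := h
  induction p with
  | nil => exact .refl (toR2_mem_freePositions (hp _ (by simp)))
  | cons hadj p ih =>
    simp only [SimpleGraph.Walk.support_cons, List.forall_mem_cons] at hp
    exact (joinedIn_freePositions_of_gridAdj hp.1 (hp.2 _ p.start_mem_support) hadj).trans
      (ih hp.2)

end Geometry

theorem unlabeled_unit_squares_monotone_reconfiguration_bounded_general
    (C : Set (ℤ × ℤ)) (hconn : ∀ p ∈ C, ∀ q ∈ C, gridReach C p q)
    (S T : Finset (ℤ × ℤ)) (hSC : ↑S ⊆ C) (hTC : ↑T ⊆ C)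
    (n : ℕ) (hS : S.card = n) (hT : T.card = n) :
    ∃ (s t : Fin n → ℤ × ℤ),
      Function.Injective s ∧ Function.Injective t ∧
      (∀ v : ℤ × ℤ, v ∈ S ↔ ∃ i : Fin n, s i = v) ∧
      (∀ v : ℤ × ℤ, v ∈ T ↔ ∃ i : Fin n, t i = v) ∧
      ∃ γ : Fin n → ℝ → ℝ × ℝ,
        ∀ i : Fin n, ContinuousOn (γ i) (Set.Icc 0 1) ∧
          γ i 0 = toR2 (s i) ∧ γ i 1 = toR2 (t i) ∧
          ∀ u ∈ Set.Icc (0 : ℝ) 1,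
            cell (γ i u) ⊆ ⋃ c ∈ C, cell (toR2 c) ∧
            (∀ j : Fin n, i < j → interior (cell (γ i u)) ∩ cell (toR2 (s j)) = ∅) ∧
            (∀ j : Fin n, j < i → interior (cell (γ i u)) ∩ cell (toR2 (t j)) = ∅) := by
  have hC : (gridGraph.induce C).Preconnected := fun a b =>
    reachable_induce_gridGraph_of_gridReach a b (hconn a a.2 b b.2)
  obtain ⟨s, t, hs, ht, hsS, htT, hreach⟩ :=
    monotonelyReconfigurable_of_preconnected_induce hC hSC hTC hS hT
  have hjoined i := joinedIn_freePositions_of_reachableIn (hreach i)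
  refine ⟨s, t, hs, ht, fun v => by rw [← Set.mem_range, hsS, Finset.mem_coe],
    fun v => by rw [← Set.mem_range, htT, Finset.mem_coe],
    fun i => (hjoined i).somePath.extend, fun i => ⟨?_, by simp, by simp, fun u hu => ?_⟩⟩
  · exact (hjoined i).somePath.continuous_extend.continuousOn
  have hfree : footprint ((hjoined i).somePath.extend u) ⊆ freeSites C s t i := by
    rw [Path.extend_apply _ hu]
    exact (hjoined i).somePath_mem _
  refine ⟨?_, fun j hij => ?_, fun j hji => ?_⟩
  · exact (cell_subset_iUnion_footprint _).trans
      (Set.biUnion_subset_biUnion_left (hfree.trans Set.sdiff_subset))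
  · exact interior_cell_inter_cell_eq_empty_of_notMem_footprint fun hj =>
      (hfree hj).2 (.inl ⟨j, hij, rfl⟩)
  · exact interior_cell_inter_cell_eq_empty_of_notMem_footprint fun hj =>
      (hfree hj).2 (.inr ⟨j, hji, rfl⟩)

/-- Unlabeled unit squares inside the domain `D = ⋃_{c ∈ C} cell c`, with the grid graph on
`C` connected, can always be monotonically reconfigured from `S` to `T`: there are
enumerations `s` of `S` and `t` of `T` and continuous collision-free paths `γ i` from
`s i` to `t i` staying inside `D`, where path `i` avoids the still-occupied cells
`cell (s j)` for `j > i` and the already-filled target cells `cell (t j)` for `j < i`. -/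
theorem unlabeled_unit_squares_monotone_reconfiguration_bounded
    (C : Finset (ℤ × ℤ))
    (hconn : ∀ p ∈ C, ∀ q ∈ C, gridReach (↑C) p q)
    (D : Set (ℝ × ℝ)) (hD : D = ⋃ c ∈ C, cell (toR2 c))
    (S T : Finset (ℤ × ℤ)) (hSC : S ⊆ C) (hTC : T ⊆ C)
    (n : ℕ) (hS : S.card = n) (hT : T.card = n) :
    ∃ (s t : Fin n → ℤ × ℤ),
      Function.Injective s ∧ Function.Injective t ∧
      (∀ v : ℤ × ℤ, v ∈ S ↔ ∃ i : Fin n, s i = v) ∧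
      (∀ v : ℤ × ℤ, v ∈ T ↔ ∃ i : Fin n, t i = v) ∧
      ∃ γ : Fin n → ℝ → ℝ × ℝ,
        ∀ i : Fin n, ContinuousOn (γ i) (Set.Icc 0 1) ∧
          γ i 0 = toR2 (s i) ∧ γ i 1 = toR2 (t i) ∧
          ∀ u ∈ Set.Icc (0 : ℝ) 1,
            cell (γ i u) ⊆ D ∧
            (∀ j : Fin n, i < j → interior (cell (γ i u)) ∩ cell (toR2 (s j)) = ∅) ∧
            (∀ j : Fin n, j < i → interior (cell (γ i u)) ∩ cell (toR2 (t j)) = ∅) := by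
  subst hD
  exact unlabeled_unit_squares_monotone_reconfiguration_bounded_general C hconn S T
    (Finset.coe_subset.2 hSC) (Finset.coe_subset.2 hTC) n hS hT
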